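/- Let n ≥ 3 and let Ω ⊆ ℝⁿ be a connected open set. Let φ : Ω → ℝ be a limiting Carleman weight, i.e. φ is smooth with nowhere-vanishing gradient and the vector field |∇φ|⁻²∇φ is a conformal Killing vector field on Ω. Then there exist a ∈ ℝ ∖ {0} and x₀ ∈ ℝⁿ such that, writing y = x − x₀, the vector field a·|∇φ(x)|⁻²∇φ(x) coincides on Ω with one of the following six vector fields: (1) γ, for some γ ∈ ℝⁿ with |γ| = 1; (2) y; (3) (γ∧σ)y, for some γ, σ ∈ ℝⁿ with |γ| = |σ| = 1 and γ·σ = 0; (4) (γ·y)y − (1/2)|y|²γ, for some unit γ; (5) (γ·y)y − (1/2)|y|²γ + (s/2)γ, for some unit γ and some s > 0; (6) (γ·y)y − (1/2)|y|²γ − (s/2)γ, for some unit γ and some s > 0. (These correspond respectively to the weights γ·x, log|x|, arctan((γ·x)/(σ·x)), −2(γ·x)/|x|², (1/√s)·arctan((−2γ·x/√s)/(|x|²/s − 1)), and (1/√s)·artanh((−2γ·x/√s)/(|x|²/s + 1)), translated by x₀ and composed with x ↦ ax + b.) -/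

import Mathlib

open scoped BigOperators
open Matrix

noncomputable section

/-- Euclidean dot product on `Fin n → ℝ`. -/
def dotp {n : ℕ} (u v : Fin n → ℝ) : ℝ := ∑ i, u i * v i

/-- Squared Euclidean norm on `Fin n → ℝ`. -/
def normSq {n : ℕ} (u : Fin n → ℝ) : ℝ := ∑ i, u i ^ 2

/-- `pd X j k x = ∂ⱼ Xₖ (x)`, the partial derivative of the `k`-th component of the
vector field `X` in the `j`-th coordinate direction. -/
def pd {n : ℕ} (X : (Fin n → ℝ) → (Fin n → ℝ)) (j k : Fin n) (x : Fin n → ℝ) : ℝ :=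
  fderiv ℝ (fun y => X y k) x (Pi.single j (1 : ℝ))

/-- `pdS f j x = ∂ⱼ f (x)` for a scalar function `f`. -/
def pdS {n : ℕ} (f : (Fin n → ℝ) → ℝ) (j : Fin n) (x : Fin n → ℝ) : ℝ :=
  fderiv ℝ f x (Pi.single j (1 : ℝ))

/-- Second partial derivative `pd2 X a b c x = ∂ₐ ∂_b X_c (x)`. -/
def pd2 {n : ℕ} (X : (Fin n → ℝ) → (Fin n → ℝ)) (a b c : Fin n) (x : Fin n → ℝ) : ℝ :=
  fderiv ℝ (fun y => pd X b c y) x (Pi.single a (1 : ℝ))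

/-- Gradient of a scalar function on `Fin n → ℝ`, as a vector field. -/
def grad {n : ℕ} (φ : (Fin n → ℝ) → ℝ) (x : Fin n → ℝ) : Fin n → ℝ :=
  fun i => fderiv ℝ φ x (Pi.single i (1 : ℝ))

/-- `X` is a conformal Killing vector field on `Ω`:
`∂ⱼXₖ + ∂ₖXⱼ = λ δⱼₖ` on `Ω` for some scalar function `λ`. -/
def IsCKF {n : ℕ} (Ω : Set (Fin n → ℝ)) (X : (Fin n → ℝ) → (Fin n → ℝ)) : Prop :=
  ∃ lam : (Fin n → ℝ) → ℝ, ∀ x ∈ Ω, ∀ j k : Fin n,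
    pd X j k x + pd X k j x = lam x * (if j = k then (1 : ℝ) else 0)

/-- The model conformal Killing field `X_{(α,c,B,γ)}(x) = (α·x)x − ½|x|²α + cx + Bx + γ`. -/
def Xmodel {n : ℕ} (α : Fin n → ℝ) (c : ℝ) (B : Matrix (Fin n) (Fin n) ℝ) (γ : Fin n → ℝ)
    (x : Fin n → ℝ) : Fin n → ℝ :=
  fun k => dotp α x * x k - (1 / 2) * normSq x * α k + c * x k + B.mulVec x k + γ k

/-- The skew-symmetric matrix `u ∧ v` with entries `(u∧v)ⱼₖ = uⱼvₖ − vⱼuₖ`. -/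
def wedge {n : ℕ} (u v : Fin n → ℝ) : Matrix (Fin n) (Fin n) ℝ :=
  Matrix.of fun j k => u j * v k - v j * u k

section analysis
open scoped ContDiff
variable {n : ℕ} {Ω : Set (Fin n → ℝ)}

lemma pdS_smooth (hΩ : IsOpen Ω) {f : (Fin n → ℝ) → ℝ} (hf : ContDiffOn ℝ ∞ f Ω) (j : Fin n) :
    ContDiffOn ℝ ∞ (pdS f j) Ω :=
  (hf.fderiv_of_isOpen hΩ (by simp)).clm_apply contDiffOn_const

lemma smooth_diffAt (hΩ : IsOpen Ω) {f : (Fin n → ℝ) → ℝ} (hf : ContDiffOn ℝ ∞ f Ω)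
    {x : Fin n → ℝ} (hx : x ∈ Ω) : DifferentiableAt ℝ f x :=
  (hf.contDiffAt (hΩ.mem_nhds hx)).differentiableAt (by simp)

lemma pdS_comm (hΩ : IsOpen Ω) {f : (Fin n → ℝ) → ℝ} (hf : ContDiffOn ℝ ∞ f Ω) (j k : Fin n)
    {x : Fin n → ℝ} (hx : x ∈ Ω) : pdS (pdS f j) k x = pdS (pdS f k) j x := by
  have hs : IsSymmSndFDerivAt ℝ f x :=
    (hf.contDiffAt (hΩ.mem_nhds hx)).isSymmSndFDerivAt (by
      simp only [minSmoothness_of_isRCLikeNormedField]; exact WithTop.coe_le_coe.2 (le_top : (2 : ℕ∞) ≤ ⊤))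
  have hd : DifferentiableAt ℝ (fderiv ℝ f) x :=
    ((hf.fderiv_of_isOpen hΩ (m := ∞) (by simp)).contDiffAt (hΩ.mem_nhds hx)).differentiableAt
      (by simp)
  have key : ∀ a b : Fin n, pdS (pdS f a) b x
      = fderiv ℝ (fderiv ℝ f) x (Pi.single b 1) (Pi.single a 1) := by
    intro a b
    unfold pdS
    rw [fderiv_clm_apply hd (differentiableAt_const _)]
    simp
  rw [key, key]
  exact hs _ _

lemma pdS_congr (hΩ : IsOpen Ω) {f g : (Fin n → ℝ) → ℝ} (h : ∀ y ∈ Ω, f y = g y) (j : Fin n)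
    {x : Fin n → ℝ} (hx : x ∈ Ω) : pdS f j x = pdS g j x := by
  have : f =ᶠ[nhds x] g := Filter.eventually_of_mem (hΩ.mem_nhds hx) h
  unfold pdS
  rw [this.fderiv_eq]

lemma pdS_add {f g : (Fin n → ℝ) → ℝ} {x : Fin n → ℝ} (hf : DifferentiableAt ℝ f x)
    (hg : DifferentiableAt ℝ g x) (j : Fin n) :
    pdS (fun y => f y + g y) j x = pdS f j x + pdS g j x := by
  unfold pdS; rw [fderiv_fun_add hf hg]; rfl

lemma pdS_sub {f g : (Fin n → ℝ) → ℝ} {x : Fin n → ℝ} (hf : DifferentiableAt ℝ f x)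
    (hg : DifferentiableAt ℝ g x) (j : Fin n) :
    pdS (fun y => f y - g y) j x = pdS f j x - pdS g j x := by
  unfold pdS; rw [fderiv_fun_sub hf hg]; rfl

lemma pdS_mul {f g : (Fin n → ℝ) → ℝ} {x : Fin n → ℝ} (hf : DifferentiableAt ℝ f x)
    (hg : DifferentiableAt ℝ g x) (j : Fin n) :
    pdS (fun y => f y * g y) j x = f x * pdS g j x + pdS f j x * g x := by
  unfold pdS; rw [fderiv_fun_mul hf hg]; simp [mul_comm]

lemma pdS_const (c : ℝ) (x : Fin n → ℝ) (j : Fin n) : pdS (fun _ => c) j x = 0 := by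
  unfold pdS; simp

lemma pdS_mul_const {f : (Fin n → ℝ) → ℝ} {x : Fin n → ℝ} (hf : DifferentiableAt ℝ f x)
    (c : ℝ) (j : Fin n) :
    pdS (fun y => f y * c) j x = pdS f j x * c := by
  rw [pdS_mul hf (differentiableAt_const c), pdS_const]; ring

lemma pdS_coord (k : Fin n) (x : Fin n → ℝ) (j : Fin n) :
    pdS (fun y => y k) j x = if j = k then 1 else 0 := by
  unfold pdS
  rw [(hasFDerivAt_apply (𝕜 := ℝ) k x).fderiv]
  simp [Pi.single_apply, eq_comm]

lemma pdS_dotp (α : Fin n → ℝ) (x : Fin n → ℝ) (j : Fin n) :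
    pdS (fun y => dotp α y) j x = α j := by
  have h : HasFDerivAt (fun y : Fin n → ℝ => dotp α y)
      (∑ i, α i • (ContinuousLinearMap.proj (R := ℝ) (φ := fun _ : Fin n => ℝ) i)) x := by
    unfold dotp
    exact HasFDerivAt.fun_sum fun i _ => (hasFDerivAt_apply (𝕜 := ℝ) i x).const_mul (α i)
  unfold pdS
  rw [h.fderiv]
  simp [Pi.single_apply]

lemma pdS_normSq (x : Fin n → ℝ) (j : Fin n) :
    pdS (fun y => normSq y) j x = 2 * x j := by
  have h : HasFDerivAt (fun y : Fin n → ℝ => normSq y)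
      (∑ i, (2 * x i) • (ContinuousLinearMap.proj (R := ℝ) (φ := fun _ : Fin n => ℝ) i)) x := by
    unfold normSq
    refine HasFDerivAt.fun_sum fun i _ => ?_
    have := (hasFDerivAt_apply (𝕜 := ℝ) i x).pow 2
    simpa using! this
  unfold pdS
  rw [h.fderiv]
  simp [Pi.single_apply]

lemma dotp_diff (α : Fin n → ℝ) : Differentiable ℝ (fun y : Fin n → ℝ => dotp α y) := by
  unfold dotp; fun_prop

lemma normSq_diff : Differentiable ℝ (fun y : Fin n → ℝ => normSq y) := by
  unfold normSq; fun_prop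

lemma integ (hΩ : IsOpen Ω) (hc : IsConnected Ω) {f g : (Fin n → ℝ) → ℝ}
    (hf : ContDiffOn ℝ ∞ f Ω) (hg : Differentiable ℝ g)
    (h : ∀ x ∈ Ω, ∀ j, pdS f j x = pdS g j x) : ∃ c, ∀ x ∈ Ω, f x = g x + c := by
  apply hΩ.exists_eq_add_of_fderiv_eq hc.isPreconnected
    (fun x hx => (smooth_diffAt hΩ hf hx).differentiableWithinAt) hg.differentiableOn
  intro x hx
  apply ContinuousLinearMap.coe_injective
  refine (Pi.basisFun ℝ (Fin n)).ext fun j => ?_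
  simpa [pdS] using h x hx j

lemma third_pt (hn : 3 ≤ n) (j k : Fin n) : ∃ l : Fin n, l ≠ j ∧ l ≠ k := by
  have : (({j, k} : Finset (Fin n))ᶜ).Nonempty := by
    rw [← Finset.card_pos, Finset.card_compl, Fintype.card_fin]
    have := Finset.card_le_two (a := j) (b := k)
    omega
  obtain ⟨l, hl⟩ := this
  simp at hl
  exact ⟨l, hl⟩

lemma liouville (hn : 3 ≤ n) (hΩ : IsOpen Ω) (hc : IsConnected Ω)
    (X : Fin n → (Fin n → ℝ) → ℝ) (hX : ∀ k, ContDiffOn ℝ ∞ (X k) Ω) (lam : (Fin n → ℝ) → ℝ)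
    (h : ∀ x ∈ Ω, ∀ j k, pdS (X k) j x + pdS (X j) k x = lam x * (if j = k then (1 : ℝ) else 0)) :
    ∃ (α : Fin n → ℝ) (c : ℝ) (B : Matrix (Fin n) (Fin n) ℝ) (γ : Fin n → ℝ),
      (∀ j k, B j k = - B k j) ∧ ∀ x ∈ Ω, (∀ k, X k x = Xmodel α c B γ x k) ∧
        ∀ j k, pdS (X k) j x = (dotp α x + c) * (if j = k then (1 : ℝ) else 0)
          + (α j * x k - x j * α k - B j k) := by
  let i0 : Fin n := ⟨0, by omega⟩
  obtain ⟨mu, hmud⟩ : ∃ f, f = pdS (X i0) i0 := ⟨_, rfl⟩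
  have hmu : ContDiffOn ℝ ∞ mu Ω := hmud ▸ pdS_smooth hΩ (hX i0) i0
  have h1 : ∀ x ∈ Ω, ∀ j k, pdS (X k) j x + pdS (X j) k x
      = mu x * (2 * (if j = k then (1 : ℝ) else 0)) := by
    intro x hx j k
    have e := h x hx i0 i0
    rw [h x hx j k]
    simp only [if_true] at e
    have : lam x = 2 * mu x := by rw [hmud]; linarith
    rw [this]; ring
  have d1 : ∀ x ∈ Ω, ∀ j k, DifferentiableAt ℝ (pdS (X k) j) x :=
    fun x hx j k => smooth_diffAt hΩ (pdS_smooth hΩ (hX k) j) hx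
  have dmu : ∀ x ∈ Ω, DifferentiableAt ℝ mu x := fun x hx => smooth_diffAt hΩ hmu hx
  have h2 : ∀ x ∈ Ω, ∀ l j k, pdS (pdS (X k) j) l x + pdS (pdS (X j) k) l x
      = pdS mu l x * (2 * (if j = k then (1 : ℝ) else 0)) := by
    intro x hx l j k
    rw [← pdS_add (d1 x hx j k) (d1 x hx k j), ← pdS_mul_const (dmu x hx)]
    exact pdS_congr hΩ (fun y hy => h1 y hy j k) l hx
  have h3 : ∀ x ∈ Ω, ∀ l j k, pdS (pdS (X k) j) l x
      = pdS mu l x * (if j = k then (1 : ℝ) else 0) + pdS mu j x * (if l = k then (1 : ℝ) else 0)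
        - pdS mu k x * (if l = j then (1 : ℝ) else 0) := by
    intro x hx l j k
    have e1 := h2 x hx l j k
    have e2 := h2 x hx j l k
    have e3 := h2 x hx k l j
    have s1 := pdS_comm hΩ (hX k) j l hx
    have s2 := pdS_comm hΩ (hX j) k l hx
    have s3 := pdS_comm hΩ (hX l) k j hx
    linarith
  have d2 : ∀ x ∈ Ω, ∀ j, DifferentiableAt ℝ (pdS mu j) x :=
    fun x hx j => smooth_diffAt hΩ (pdS_smooth hΩ hmu j) hx
  have h4 : ∀ x ∈ Ω, ∀ m l j k, pdS (pdS (pdS (X k) j) l) m x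
      = pdS (pdS mu l) m x * (if j = k then (1 : ℝ) else 0)
        + pdS (pdS mu j) m x * (if l = k then (1 : ℝ) else 0)
        - pdS (pdS mu k) m x * (if l = j then (1 : ℝ) else 0) := by
    intro x hx m l j k
    rw [← pdS_mul_const (d2 x hx l), ← pdS_mul_const (d2 x hx j), ← pdS_mul_const (d2 x hx k),
      ← pdS_add ((d2 x hx l).mul_const _) ((d2 x hx j).mul_const _),
      ← pdS_sub (((d2 x hx l).mul_const _).fun_add ((d2 x hx j).mul_const _))
        ((d2 x hx k).mul_const _)]
    exact pdS_congr hΩ (fun y hy => h3 y hy l j k) m hx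
  have h5 : ∀ x ∈ Ω, ∀ m l j k,
      pdS (pdS mu j) m x * (if l = k then (1 : ℝ) else 0)
        - pdS (pdS mu k) m x * (if l = j then (1 : ℝ) else 0)
      = pdS (pdS mu j) l x * (if m = k then (1 : ℝ) else 0)
        - pdS (pdS mu k) l x * (if m = j then (1 : ℝ) else 0) := by
    intro x hx m l j k
    have e := pdS_comm hΩ (pdS_smooth hΩ (hX k) j) l m hx
    rw [h4 x hx, h4 x hx, pdS_comm hΩ hmu l m hx] at e
    linarith
  have h6 : ∀ x ∈ Ω, ∀ m l, m ≠ l → pdS (pdS mu m) m x + pdS (pdS mu l) l x = 0 := by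
    intro x hx m l hml
    have e := h5 x hx m l m l
    simp [hml, hml.symm] at e
    linarith
  have h7 : ∀ x ∈ Ω, ∀ j m, pdS (pdS mu j) m x = 0 := by
    intro x hx j m
    obtain ⟨l, hlj, hlm⟩ := third_pt hn j m
    by_cases hjm : j = m
    · subst hjm
      obtain ⟨p, hpj, hpl⟩ := third_pt hn j l
      have e1 := h6 x hx j l hlj.symm
      have e2 := h6 x hx j p hpj.symm
      have e3 := h6 x hx p l hpl
      linarith
    · have e := h5 x hx m l j l
      simp [hlj, hlm.symm, Ne.symm hjm] at e
      exact e
  have h8 : ∀ j, ∃ a, ∀ x ∈ Ω, pdS mu j x = a := by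
    intro j
    obtain ⟨a, ha⟩ := integ hΩ hc (pdS_smooth hΩ hmu j) (g := fun _ => 0) (by fun_prop)
      (fun x hx m => by rw [h7 x hx, pdS_const])
    exact ⟨a, fun x hx => by simpa using ha x hx⟩
  choose α hα using h8
  obtain ⟨c, hcc⟩ := integ hΩ hc hmu (dotp_diff α)
    (fun x hx j => by rw [hα j x hx, pdS_dotp])
  have h9 : ∀ j k, ∃ e, ∀ x ∈ Ω, pdS (X k) j x =
      (dotp α x * (if j = k then (1 : ℝ) else 0) + x k * α j - x j * α k) + e := by
    intro j k
    refine integ hΩ hc (pdS_smooth hΩ (hX k) j) ?_ ?_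
    · have := dotp_diff α
      fun_prop
    · intro x hx l
      have hd := dotp_diff α x
      rw [pdS_sub (by fun_prop) (by fun_prop), pdS_add (by fun_prop) (by fun_prop),
        pdS_mul_const hd, pdS_mul_const (by fun_prop), pdS_mul_const (by fun_prop), pdS_dotp,
        pdS_coord, pdS_coord, h3 x hx, hα l x hx, hα j x hx, hα k x hx]
      ring
  choose E hE using h9
  have h10 : ∀ k, ∃ g, ∀ x ∈ Ω, X k x =
      (dotp α x * x k - normSq x * (1 / 2 * α k) + dotp (fun j => E j k) x) + g := by
    intro k
    refine integ hΩ hc (hX k) ?_ ?_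
    · have := dotp_diff α
      have := dotp_diff (fun j => E j k)
      have := normSq_diff (n := n)
      fun_prop
    · intro x hx l
      have hd := dotp_diff α x
      have hd2 := dotp_diff (fun j => E j k) x
      have hd3 := normSq_diff (n := n) x
      rw [pdS_add (by fun_prop) hd2, pdS_sub (by fun_prop) (by fun_prop),
        pdS_mul hd (by fun_prop), pdS_mul_const hd3, pdS_normSq, pdS_dotp, pdS_dotp,
        pdS_coord, hE l k x hx]
      ring
  choose γ hγ using h10
  obtain ⟨p, hp⟩ := hc.nonempty
  have hEs : ∀ j k, E j k + E k j = c * (2 * (if j = k then (1 : ℝ) else 0)) := by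
    intro j k
    have e := h1 p hp j k
    rw [hE j k p hp, hE k j p hp, hcc p hp] at e
    have : (if k = j then (1 : ℝ) else 0) = if j = k then 1 else 0 := by simp only [eq_comm]
    rw [this] at e
    linarith
  refine ⟨α, c, Matrix.of fun k j => E j k - c * (if j = k then (1 : ℝ) else 0), γ, ?_, ?_⟩
  · intro j k
    simp only [Matrix.of_apply]
    have := hEs j k
    have e : (if k = j then (1 : ℝ) else 0) = if j = k then 1 else 0 := by simp only [eq_comm]
    rw [e]; linarith
  · intro x hx
    refine ⟨fun k => ?_, fun j k => ?_⟩
    · rw [hγ k x hx]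
      simp only [Xmodel, Matrix.mulVec, dotProduct, Matrix.of_apply, sub_mul,
        Finset.sum_sub_distrib]
      simp [dotp]
      ring
    · rw [hE j k x hx]
      simp only [Matrix.of_apply]
      have := hEs j k
      have e : (if k = j then (1 : ℝ) else 0) = if j = k then 1 else 0 := by simp only [eq_comm]
      rw [e]; linarith

end analysis
section algebra
variable {n : ℕ}

lemma dotp_eq (u v : Fin n → ℝ) : dotp u v = u ⬝ᵥ v := rfl

lemma normSq_eq (u : Fin n → ℝ) : normSq u = u ⬝ᵥ u := by
  simp [normSq, dotProduct, sq]

lemma normSq_pos {u : Fin n → ℝ} (hu : u ≠ 0) : 0 < normSq u := by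
  rw [normSq_eq]
  have h0 : 0 ≤ u ⬝ᵥ u := Finset.sum_nonneg fun i _ => mul_self_nonneg _
  exact lt_of_le_of_ne h0 fun h => hu (dotProduct_self_eq_zero.1 h.symm)

lemma normSq_smul (a : ℝ) (u : Fin n → ℝ) : normSq (a • u) = a ^ 2 * normSq u := by
  simp [normSq_eq]; ring

lemma normSq_normalize {u : Fin n → ℝ} (hu : u ≠ 0) :
    normSq ((Real.sqrt (normSq u))⁻¹ • u) = 1 := by
  have h := normSq_pos hu
  rw [normSq_smul, inv_pow, Real.sq_sqrt h.le]
  field_simp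

lemma skew_dot {B : Matrix (Fin n) (Fin n) ℝ} (hB : ∀ j k, B j k = - B k j) (u v : Fin n → ℝ) :
    u ⬝ᵥ B.mulVec v = - (v ⬝ᵥ B.mulVec u) := by
  have ht : B.transpose = - B := by ext j k; simp [hB k j]
  rw [Matrix.dotProduct_mulVec, ← Matrix.mulVec_transpose, ht, Matrix.neg_mulVec,
    neg_dotProduct, dotProduct_comm]

/-- homogeneous components of the integrability condition -/
lemma homog {α γ : Fin n → ℝ} {B : Matrix (Fin n) (Fin n) ℝ}
    (hW : ∀ (y : Fin n → ℝ) (j k l : Fin n),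
      (α j * y k - y j * α k - B j k) * Xmodel α 0 B γ y l
      + (α k * y l - y k * α l - B k l) * Xmodel α 0 B γ y j
      + (α l * y j - y l * α j - B l j) * Xmodel α 0 B γ y k = 0)
    (v : Fin n → ℝ) (j k l : Fin n) :
    ((α j * v k - v j * α k) * B.mulVec v l + (α k * v l - v k * α l) * B.mulVec v j
      + (α l * v j - v l * α j) * B.mulVec v k
      - (B j k * (dotp α v * v l - 1 / 2 * normSq v * α l)
        + B k l * (dotp α v * v j - 1 / 2 * normSq v * α j)
        + B l j * (dotp α v * v k - 1 / 2 * normSq v * α k)) = 0) ∧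
    ((α j * v k - v j * α k) * γ l + (α k * v l - v k * α l) * γ j
      + (α l * v j - v l * α j) * γ k
      - (B j k * B.mulVec v l + B k l * B.mulVec v j + B l j * B.mulVec v k) = 0) := by
  have hX : ∀ (t : ℝ) (i : Fin n), Xmodel α 0 B γ (t • v) i
      = t ^ 2 * (dotp α v * v i - 1 / 2 * normSq v * α i) + t * B.mulVec v i + γ i := by
    intro t i
    simp only [Xmodel, normSq_smul, dotp_eq, dotProduct_smul, Matrix.mulVec_smul, Pi.smul_apply,
      smul_eq_mul]
    ring
  have e0 := hW ((0 : ℝ) • v) j k l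
  have e1 := hW ((1 : ℝ) • v) j k l
  have e2 := hW ((-1 : ℝ) • v) j k l
  have e3 := hW ((2 : ℝ) • v) j k l
  simp only [hX, Pi.smul_apply, smul_eq_mul] at e0 e1 e2 e3
  constructor
  · linear_combination (1 / 2) * e1 + (1 / 2) * e2 - e0
  · linear_combination e1 - (1 / 3) * e2 - (1 / 6) * e3 - (1 / 2) * e0

lemma par_of_wedge (hn : 3 ≤ n) {α γ : Fin n → ℝ} (hα : α ≠ 0)
    (h : ∀ (v : Fin n → ℝ) (j k l : Fin n), (α j * v k - v j * α k) * γ l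
      + (α k * v l - v k * α l) * γ j + (α l * v j - v l * α j) * γ k = 0) :
    ∃ t : ℝ, γ = t • α := by
  have h1 : ∀ j k, α k * γ j = α j * γ k := by
    intro j k
    obtain ⟨l, hlj, hlk⟩ := third_pt hn j k
    have := h (Pi.single l 1) j k l
    simp [hlj.symm, hlk.symm] at this
    linarith
  obtain ⟨p, hp⟩ := Function.ne_iff.1 hα
  simp at hp
  refine ⟨γ p / α p, ?_⟩
  ext j
  have := h1 j p
  simp only [Pi.smul_apply, smul_eq_mul]
  field_simp
  linarith

lemma core (hn : 3 ≤ n) {α γ : Fin n → ℝ} (hα : α ≠ 0) {B : Matrix (Fin n) (Fin n) ℝ}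
    (hB : ∀ j k, B j k = - B k j) (hBα : B.mulVec α = 0)
    (hW : ∀ (y : Fin n → ℝ) (j k l : Fin n),
      (α j * y k - y j * α k - B j k) * Xmodel α 0 B γ y l
      + (α k * y l - y k * α l - B k l) * Xmodel α 0 B γ y j
      + (α l * y j - y l * α j - B l j) * Xmodel α 0 B γ y k = 0) :
    B = 0 ∧ ∃ t : ℝ, γ = t • α := by
  have hN : 0 < α ⬝ᵥ α := normSq_eq α ▸ normSq_pos hα
  have hz : ∀ y : Fin n → ℝ, α ⬝ᵥ y = 0 → B.mulVec y = 0 := by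
    intro y hy
    by_cases hy0 : y = 0
    · simp [hy0]
    have hM : 0 < y ⬝ᵥ y := normSq_eq y ▸ normSq_pos hy0
    set L := B.mulVec y with hL
    have hαL : α ⬝ᵥ L = 0 := by rw [hL, skew_dot hB, hBα]; simp
    have hyL : y ⬝ᵥ L = 0 := by have := skew_dot hB y y; rw [← hL] at this; linarith
    have hBr : ∀ k, ∑ l, B k l * α l = 0 := fun k => congrFun hBα k
    have e1 : ∀ j k, y j * L k - y k * L j + 1 / 2 * (y ⬝ᵥ y) * B j k = 0 := by
      intro j k
      have e : ∑ l, α l * ((α j * y k - y j * α k) * L l + (α k * y l - y k * α l) * L j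
          + (α l * y j - y l * α j) * L k
          - (B j k * (dotp α y * y l - 1 / 2 * normSq y * α l)
            + B k l * (dotp α y * y j - 1 / 2 * normSq y * α j)
            + B l j * (dotp α y * y k - 1 / 2 * normSq y * α k))) = 0 :=
        Finset.sum_eq_zero fun l _ => by rw [(homog hW y j k l).1, mul_zero]
      rw [dotp_eq, hy, normSq_eq] at e
      have e' : (α j * y k - y j * α k) * (α ⬝ᵥ L) + (α k * (α ⬝ᵥ y) - y k * (α ⬝ᵥ α)) * L j
          + ((α ⬝ᵥ α) * y j - (α ⬝ᵥ y) * α j) * L k + 1 / 2 * (y ⬝ᵥ y) * (B j k * (α ⬝ᵥ α)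
          + (∑ l, B k l * α l) * α j - (∑ l, B j l * α l) * α k) = 0 := by
        rw [← e]
        generalize y ⬝ᵥ y = M
        simp only [dotProduct, Finset.mul_sum, Finset.sum_mul, ← Finset.sum_add_distrib,
          ← Finset.sum_sub_distrib]
        refine Finset.sum_congr rfl fun l _ => ?_
        rw [hB l j]
        ring
      rw [hαL, hy, hBr, hBr] at e'
      have : (α ⬝ᵥ α) * (y j * L k - y k * L j + 1 / 2 * (y ⬝ᵥ y) * B j k) = 0 := by
        linear_combination e'
      exact (mul_eq_zero.1 this).resolve_left hN.ne'
    ext k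
    have e2 : ∑ j, y j * (y j * L k - y k * L j + 1 / 2 * (y ⬝ᵥ y) * B j k) = 0 :=
      Finset.sum_eq_zero fun j _ => by rw [e1, mul_zero]
    have e3 : (y ⬝ᵥ y) * L k - y k * (y ⬝ᵥ L) - 1 / 2 * (y ⬝ᵥ y) * L k = 0 := by
      have hBs : ∑ j, y j * B j k = - L k := by
        rw [hL, Matrix.mulVec, dotProduct, ← Finset.sum_neg_distrib]
        exact Finset.sum_congr rfl fun j _ => by rw [hB j k]; ring
      have e4 : ∑ j, y j * (y j * L k - y k * L j + 1 / 2 * (y ⬝ᵥ y) * B j k)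
          = (y ⬝ᵥ y) * L k - y k * (y ⬝ᵥ L) + 1 / 2 * (y ⬝ᵥ y) * ∑ j, y j * B j k := by
        generalize 1 / 2 * (y ⬝ᵥ y) = M
        simp only [dotProduct, Finset.mul_sum, Finset.sum_mul, ← Finset.sum_add_distrib,
          ← Finset.sum_sub_distrib]
        exact Finset.sum_congr rfl fun j _ => by ring
      rw [e4, hBs] at e2
      linear_combination e2
    rw [hyL] at e3
    have : (y ⬝ᵥ y) * L k = 0 := by linarith
    simpa [hM.ne'] using this
  have hB0 : B = 0 := by
    have hv : ∀ v, B.mulVec v = 0 := by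
      intro v
      have h1 := hz (v - ((α ⬝ᵥ v) / (α ⬝ᵥ α)) • α) (by
        rw [dotProduct_sub, dotProduct_smul, smul_eq_mul]; field_simp; ring)
      rw [Matrix.mulVec_sub, Matrix.mulVec_smul, hBα] at h1
      simpa using h1
    ext j k
    have := congrFun (hv (Pi.single k 1)) j
    simpa using this
  refine ⟨hB0, par_of_wedge hn hα fun v j k l => ?_⟩
  have := (homog hW v j k l).2
  rw [hB0] at this
  simpa using this

lemma Xmodel_translate (α γ x₀ : Fin n → ℝ) (c : ℝ) (B : Matrix (Fin n) (Fin n) ℝ) (y : Fin n → ℝ)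
    (k : Fin n) :
    Xmodel α c B γ (y + x₀) k
      = Xmodel α (c + dotp α x₀) (B + wedge x₀ α) (Xmodel α c B γ x₀) y k := by
  have hw : (wedge x₀ α).mulVec y k = x₀ k * dotp α y - α k * dotp x₀ y := by
    simp only [wedge, Matrix.mulVec, dotProduct, Matrix.of_apply, dotp, Finset.mul_sum,
      ← Finset.sum_sub_distrib]
    exact Finset.sum_congr rfl fun i _ => by ring
  simp only [Xmodel, Matrix.add_mulVec, Pi.add_apply, hw, normSq_eq, dotp_eq, Matrix.mulVec_add,
    dotProduct_add, add_dotProduct, dotProduct_comm y x₀]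
  ring

lemma wedge_mulVec (u v y : Fin n → ℝ) (k : Fin n) :
    (wedge u v).mulVec y k = u k * dotp v y - v k * dotp u y := by
  simp only [wedge, Matrix.mulVec, dotProduct, Matrix.of_apply, dotp, Finset.mul_sum,
    ← Finset.sum_sub_distrib]
  exact Finset.sum_congr rfl fun i _ => by ring

/-- case α ≠ 0 -/
lemma case_ne (hn : 3 ≤ n) {α γ : Fin n → ℝ} (hα : α ≠ 0) {c : ℝ}
    {B : Matrix (Fin n) (Fin n) ℝ} (hB : ∀ j k, B j k = - B k j)
    (hW : ∀ (y : Fin n → ℝ) (j k l : Fin n),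
      (α j * y k - y j * α k - B j k) * Xmodel α c B γ y l
      + (α k * y l - y k * α l - B k l) * Xmodel α c B γ y j
      + (α l * y j - y l * α j - B l j) * Xmodel α c B γ y k = 0) :
    ∃ (x₀ : Fin n → ℝ) (t : ℝ), ∀ x k, Xmodel α c B γ x k
      = dotp α (x - x₀) * (x - x₀) k - (1 / 2) * normSq (x - x₀) * α k + t * α k := by
  have hN : 0 < α ⬝ᵥ α := normSq_eq α ▸ normSq_pos hα
  let x₀ : Fin n → ℝ := (α ⬝ᵥ α)⁻¹ • (- B.mulVec α - c • α)
  have hαB : α ⬝ᵥ B.mulVec α = 0 := by have := skew_dot hB α α; linarith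
  have hc0 : c + dotp α x₀ = 0 := by
    simp only [x₀, dotp_eq, dotProduct_smul, dotProduct_sub, dotProduct_neg, hαB, smul_eq_mul]
    field_simp; ring
  have hBα : (B + wedge x₀ α).mulVec α = 0 := by
    ext k
    rw [Matrix.add_mulVec, Pi.add_apply, wedge_mulVec]
    have h2 : dotp x₀ α = -c := by rw [dotp_eq, dotProduct_comm, ← dotp_eq]; linarith
    rw [h2]
    simp only [x₀, dotp_eq, Pi.smul_apply, Pi.sub_apply, Pi.neg_apply, smul_eq_mul, Pi.zero_apply]
    field_simp; ring
  have hT : ∀ y k, Xmodel α c B γ (y + x₀) k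
      = Xmodel α 0 (B + wedge x₀ α) (Xmodel α c B γ x₀) y k := by
    intro y k; rw [Xmodel_translate, hc0]
  obtain ⟨hB0, t, ht⟩ := core hn hα (γ := Xmodel α c B γ x₀) (B := B + wedge x₀ α)
    (by intro j k; simp only [Matrix.add_apply, wedge, Matrix.of_apply]; rw [hB j k]; ring)
    hBα (by
      intro y j k l
      have e := hW (y + x₀) j k l
      simp only [hT, Pi.add_apply] at e
      have hwd : ∀ a b, (B + wedge x₀ α) a b = B a b + (x₀ a * α b - α a * x₀ b) :=
        fun a b => rfl
      rw [hwd, hwd, hwd]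
      linear_combination e)
  refine ⟨x₀, t, fun x k => ?_⟩
  have := hT (x - x₀) k
  rw [sub_add_cancel, hB0, ht] at this
  rw [this]
  simp [Xmodel]

/-- case α = 0 -/
lemma case_zero (hn : 3 ≤ n) {γ : Fin n → ℝ} {c : ℝ}
    {B : Matrix (Fin n) (Fin n) ℝ} (hB : ∀ j k, B j k = - B k j) (hB0 : B ≠ 0)
    (hW : ∀ (y : Fin n → ℝ) (j k l : Fin n),
      B j k * (c * y l + B.mulVec y l + γ l) + B k l * (c * y j + B.mulVec y j + γ j)
      + B l j * (c * y k + B.mulVec y k + γ k) = 0) :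
    c = 0 ∧ ∃ (x₀ u v : Fin n → ℝ) (a : ℝ), a ≠ 0 ∧ normSq u = 1 ∧ normSq v = 1 ∧ dotp u v = 0 ∧
      ∀ x k, a * (B.mulVec x k + γ k) = (wedge u v).mulVec (x - x₀) k := by
  obtain ⟨p, q, hpq⟩ : ∃ p q, B p q ≠ 0 := by
    by_contra! h
    exact hB0 (by ext j k; exact h j k)
  have hd : ∀ j, B j j = 0 := fun j => by have := hB j j; linarith
  have hγ : ∀ j k l, B j k * γ l + B k l * γ j + B l j * γ k = 0 := by
    intro j k l; simpa using hW 0 j k l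
  have hs : ∀ m j k l, B j k * (c * (if l = m then 1 else 0) + B l m)
      + B k l * (c * (if j = m then 1 else 0) + B j m)
      + B l j * (c * (if k = m then 1 else 0) + B k m) = 0 := by
    intro m j k l
    have e := hW (Pi.single m 1) j k l
    have e2 := hγ j k l
    simp only [Matrix.mulVec_single_one, Matrix.col_apply, Pi.single_apply] at e
    linarith
  have hne : p ≠ q := fun h => hpq (by rw [h]; exact hd q)
  have hc : c = 0 := by
    obtain ⟨l, hlp, hlq⟩ := third_pt hn p q
    have e := hs l p q l
    simp [hlp.symm, hlq.symm, hd] at e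
    have e' : B p q * c = 0 := by rw [hB l p] at e; linarith
    exact (mul_eq_zero.1 e').resolve_left hpq
  refine ⟨hc, ?_⟩
  subst hc
  -- rank two
  let u : Fin n → ℝ := B p
  let w : Fin n → ℝ := B q
  have hBe : ∀ l m, B p q * B l m = u l * w m - w l * u m := by
    intro l m
    have e := hs m p q l
    simp only [u, w]
    rw [hB l p] at e
    linarith
  have hu : u ≠ 0 := fun h => hpq (congrFun h q)
  have hNu := normSq_pos hu
  let w' : Fin n → ℝ := w - (dotp u w / normSq u) • u
  have huw : dotp u w' = 0 := by
    simp only [w', dotp_eq, normSq_eq, dotProduct_sub, dotProduct_smul, smul_eq_mul]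
    rw [normSq_eq] at hNu
    field_simp; ring
  have hBe' : ∀ l m, B p q * B l m = u l * w' m - w' l * u m := by
    intro l m
    rw [hBe]; simp only [w', Pi.sub_apply, Pi.smul_apply, smul_eq_mul]; ring
  have hw' : w' ≠ 0 := by
    intro h
    have := hBe' p q
    rw [h] at this
    simp [hpq] at this
  have hNw := normSq_pos hw'
  set ru := Real.sqrt (normSq u) with hru
  set rw' := Real.sqrt (normSq w') with hrw
  have hru0 : 0 < ru := Real.sqrt_pos.2 hNu
  have hrw0 : 0 < rw' := Real.sqrt_pos.2 hNw
  let z : Fin n → ℝ := (B p q)⁻¹ • (γ p • Pi.single q 1 - γ q • Pi.single p 1)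
  have hz : ∀ k, B.mulVec z k = γ k := by
    intro k
    have e := hγ p q k
    rw [hB q k] at e
    simp only [z, Matrix.mulVec_smul, Matrix.mulVec_sub, Matrix.mulVec_single_one, Pi.smul_apply,
      Pi.sub_apply, smul_eq_mul, Matrix.col_apply]
    field_simp
    linarith
  have hBm : ∀ y k, B p q * B.mulVec y k = u k * dotp w' y - w' k * dotp u y := by
    intro y k
    simp only [Matrix.mulVec, dotProduct, dotp, Finset.mul_sum, ← Finset.sum_sub_distrib]
    refine Finset.sum_congr rfl fun i _ => ?_
    linear_combination y i * hBe' k i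
  refine ⟨-z, ru⁻¹ • u, rw'⁻¹ • w', B p q / (ru * rw'), by positivity, normSq_normalize hu,
    normSq_normalize hw', ?_, ?_⟩
  · rw [dotp_eq] at huw
    simp [dotp_eq, huw]
  · intro x k
    rw [← hz k, ← Pi.add_apply, ← Matrix.mulVec_add, wedge_mulVec, sub_neg_eq_add, div_mul_eq_mul_div,
      hBm]
    simp only [dotp_eq, smul_dotProduct, Pi.smul_apply, smul_eq_mul]
    field_simp

end algebra
section assembly
open scoped ContDiff
variable {n : ℕ} {Ω : Set (Fin n → ℝ)}

lemma wedge_cond (hΩ : IsOpen Ω) (φ : (Fin n → ℝ) → ℝ) (hφ : ContDiffOn ℝ ∞ φ Ω)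
    (hgrad : ∀ x ∈ Ω, grad φ x ≠ 0) (X : Fin n → (Fin n → ℝ) → ℝ)
    (hXd : ∀ k x, X k x = (normSq (grad φ x))⁻¹ * grad φ x k) :
    (∀ k, ContDiffOn ℝ ∞ (X k) Ω) ∧ ∀ x ∈ Ω, ∀ j k l,
      (pdS (X k) j x - pdS (X j) k x) * X l x + (pdS (X l) k x - pdS (X k) l x) * X j x
      + (pdS (X j) l x - pdS (X l) j x) * X k x = 0 := by
  have hg : ∀ i, ContDiffOn ℝ ∞ (pdS φ i) Ω := fun i => pdS_smooth hΩ hφ i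
  have hNs : ContDiffOn ℝ ∞ (fun x => normSq (grad φ x)) Ω := by
    unfold normSq
    exact ContDiffOn.sum fun i _ => (hg i).pow 2
  have hN0 : ∀ x ∈ Ω, normSq (grad φ x) ≠ 0 := fun x hx => (normSq_pos (hgrad x hx)).ne'
  have hX : ∀ k, ContDiffOn ℝ ∞ (X k) Ω := by
    intro k
    have : X k = fun x => (normSq (grad φ x))⁻¹ * pdS φ k x := by
      ext x; exact hXd k x
    rw [this]
    exact (hNs.inv hN0).mul (hg k)
  refine ⟨hX, fun x hx => ?_⟩
  have hXN : ∀ k, ∀ y ∈ Ω, X k y * normSq (grad φ y) = pdS φ k y := by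
    intro k y hy
    have := hN0 y hy
    rw [hXd]
    change _ = grad φ y k
    field_simp
  have hD : ∀ k j, X k x * pdS (fun y => normSq (grad φ y)) j x
      + pdS (X k) j x * normSq (grad φ x) = pdS (pdS φ k) j x := by
    intro k j
    rw [← pdS_mul (smooth_diffAt hΩ (hX k) hx) (smooth_diffAt hΩ hNs hx)]
    exact pdS_congr hΩ (hXN k) j hx
  intro j k l
  have e1 := (hD k j).trans ((pdS_comm hΩ hφ k j hx).trans (hD j k).symm)
  have e2 := (hD l k).trans ((pdS_comm hΩ hφ l k hx).trans (hD k l).symm)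
  have e3 := (hD j l).trans ((pdS_comm hΩ hφ j l hx).trans (hD l j).symm)
  apply (mul_eq_zero.1 _).resolve_left (hN0 x hx)
  linear_combination X l x * e1 + X j x * e2 + X k x * e3

lemma Xmodel_contDiff (α γ : Fin n → ℝ) (c : ℝ) (B : Matrix (Fin n) (Fin n) ℝ) (k : Fin n) :
    ContDiff ℝ ω (fun x => Xmodel α c B γ x k) := by
  unfold Xmodel dotp normSq Matrix.mulVec dotProduct
  fun_prop

lemma extend (hΩ : IsOpen Ω) (hc : IsConnected Ω) {f : (Fin n → ℝ) → ℝ}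
    (hf : ContDiff ℝ ω f) (h : ∀ x ∈ Ω, f x = 0) (x : Fin n → ℝ) : f x = 0 := by
  obtain ⟨p, hp⟩ := hc.nonempty
  have ha : AnalyticOnNhd ℝ f Set.univ := fun x _ => hf.contDiffAt.analyticAt
  have hz : AnalyticOnNhd ℝ (fun _ : Fin n → ℝ => (0 : ℝ)) Set.univ := fun x _ => analyticAt_const
  exact congrFun (ha.eq_of_eventuallyEq hz (Filter.eventually_of_mem (hΩ.mem_nhds hp) h)) x

end assembly

/-- classification of limiting Carleman weights in `ℝⁿ`, `n ≥ 3`, in terms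
of their associated conformal Killing vector fields: up to a scaling `a ≠ 0` and a
translation by `x₀`, the field `|∇φ|⁻²∇φ` of any LCW `φ` is one of six model fields. -/
theorem stmt_11 {n : ℕ} (hn : 3 ≤ n) (Ω : Set (Fin n → ℝ)) (hΩ : IsOpen Ω)
    (hconn : IsConnected Ω) (φ : (Fin n → ℝ) → ℝ) (hφ : ContDiffOn ℝ (⊤ : ℕ∞) φ Ω)
    (hgrad : ∀ x ∈ Ω, grad φ x ≠ 0)
    (hckf : IsCKF Ω (fun x => (normSq (grad φ x))⁻¹ • grad φ x)) :
    ∃ (a : ℝ) (x₀ : Fin n → ℝ), a ≠ 0 ∧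
      ((∃ γ : Fin n → ℝ, normSq γ = 1 ∧
          ∀ x ∈ Ω, a • ((normSq (grad φ x))⁻¹ • grad φ x) = γ) ∨
       (∀ x ∈ Ω, a • ((normSq (grad φ x))⁻¹ • grad φ x) = x - x₀) ∨
       (∃ γ σ : Fin n → ℝ, normSq γ = 1 ∧ normSq σ = 1 ∧ dotp γ σ = 0 ∧
          ∀ x ∈ Ω, a • ((normSq (grad φ x))⁻¹ • grad φ x)
            = (wedge γ σ).mulVec (x - x₀)) ∨
       (∃ γ : Fin n → ℝ, normSq γ = 1 ∧
          ∀ x ∈ Ω, a • ((normSq (grad φ x))⁻¹ • grad φ x)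
            = dotp γ (x - x₀) • (x - x₀) - ((1 / 2) * normSq (x - x₀)) • γ) ∨
       (∃ (γ : Fin n → ℝ) (s : ℝ), normSq γ = 1 ∧ 0 < s ∧
          ∀ x ∈ Ω, a • ((normSq (grad φ x))⁻¹ • grad φ x)
            = dotp γ (x - x₀) • (x - x₀) - ((1 / 2) * normSq (x - x₀)) • γ
              + (s / 2) • γ) ∨
       (∃ (γ : Fin n → ℝ) (s : ℝ), normSq γ = 1 ∧ 0 < s ∧
          ∀ x ∈ Ω, a • ((normSq (grad φ x))⁻¹ • grad φ x)
            = dotp γ (x - x₀) • (x - x₀) - ((1 / 2) * normSq (x - x₀)) • γ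
              - (s / 2) • γ)) := by
  obtain ⟨lam, hlam⟩ := hckf
  let X : Fin n → (Fin n → ℝ) → ℝ := fun k x => ((normSq (grad φ x))⁻¹ • grad φ x) k
  have hXd : ∀ k x, X k x = (normSq (grad φ x))⁻¹ * grad φ x k := fun k x => rfl
  obtain ⟨hXs, hXw⟩ := wedge_cond hΩ φ hφ hgrad X hXd
  obtain ⟨α, c, B, γ, hB, hM⟩ := liouville hn hΩ hconn X hXs lam hlam
  have hW : ∀ (y : Fin n → ℝ) (j k l : Fin n),
      (α j * y k - y j * α k - B j k) * Xmodel α c B γ y l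
      + (α k * y l - y k * α l - B k l) * Xmodel α c B γ y j
      + (α l * y j - y l * α j - B l j) * Xmodel α c B γ y k = 0 := by
    intro y j k l
    refine extend hΩ hconn (f := fun y => (α j * y k - y j * α k - B j k) * Xmodel α c B γ y l
      + (α k * y l - y k * α l - B k l) * Xmodel α c B γ y j
      + (α l * y j - y l * α j - B l j) * Xmodel α c B γ y k) ?_ ?_ y
    · have h1 := Xmodel_contDiff α γ c B j
      have h2 := Xmodel_contDiff α γ c B k
      have h3 := Xmodel_contDiff α γ c B l
      fun_prop
    · intro x hx
      have e := hXw x hx j k l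
      obtain ⟨m1, m2⟩ := hM x hx
      have sy : ∀ a b : Fin n, (if a = b then (1 : ℝ) else 0) = if b = a then 1 else 0 :=
        fun a b => by simp only [eq_comm]
      rw [m2 j k, m2 k j, m2 k l, m2 l k, m2 l j, m2 j l, m1, m1, m1, sy k j, sy l k, sy j l,
        hB k j, hB l k, hB j l] at e
      linear_combination (1 / 2) * e
  have hfin : ∀ a x, x ∈ Ω → ∀ k, (a • ((normSq (grad φ x))⁻¹ • grad φ x)) k
      = a * Xmodel α c B γ x k := by
    intro a x hx k
    rw [← (hM x hx).1 k]; rfl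
  by_cases hα : α = 0
  · subst hα
    have hm : ∀ x k, Xmodel 0 c B γ x k = c * x k + B.mulVec x k + γ k := by
      intro x k; simp [Xmodel, dotp]
    by_cases hB0 : B = 0
    · subst hB0
      by_cases hc : c = 0
      · subst hc
        have hγ : γ ≠ 0 := by
          intro h0
          obtain ⟨p, hp⟩ := hconn.nonempty
          apply hgrad p hp
          ext k
          have e := (hM p hp).1 k
          rw [hm, hXd, h0] at e
          simpa [(normSq_pos (hgrad p hp)).ne'] using e
        have hs := Real.sqrt_pos.2 (normSq_pos hγ)
        refine ⟨(Real.sqrt (normSq γ))⁻¹, 0, (inv_pos.2 hs).ne', Or.inl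
          ⟨(Real.sqrt (normSq γ))⁻¹ • γ, normSq_normalize hγ, fun x hx => ?_⟩⟩
        ext k
        rw [hfin _ x hx, hm]
        simp
      · refine ⟨c⁻¹, -(c⁻¹ • γ), inv_ne_zero hc, Or.inr (Or.inl fun x hx => ?_)⟩
        ext k
        rw [hfin _ x hx, hm]
        simp
        field_simp
    · obtain ⟨hc, x₀, u, v, a, ha, hu, hv, huv, h⟩ := case_zero hn (γ := γ) (c := c) hB hB0 (by
        intro y j k l
        have e := hW y j k l
        simp only [hm, Pi.zero_apply] at e
        linear_combination -e)
      refine ⟨a, x₀, ha, Or.inr (Or.inr (Or.inl ⟨u, v, hu, hv, huv, fun x hx => ?_⟩))⟩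
      ext k
      rw [hfin _ x hx, hm, ← h x k, hc]
      ring
  · obtain ⟨x₀, t, h⟩ := case_ne hn hα hB hW
    have hs := Real.sqrt_pos.2 (normSq_pos hα)
    have hn1 := normSq_normalize hα
    set r := (Real.sqrt (normSq α))⁻¹ with hr
    have hr0 : r ≠ 0 := (inv_pos.2 hs).ne'
    have key : ∀ x ∈ Ω, r • ((normSq (grad φ x))⁻¹ • grad φ x)
        = dotp (r • α) (x - x₀) • (x - x₀) - ((1 / 2) * normSq (x - x₀)) • (r • α)
          + t • (r • α) := by
      intro x hx
      ext k
      rw [hfin _ x hx, h]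
      simp only [dotp_eq, smul_dotProduct, Pi.add_apply, Pi.sub_apply, Pi.smul_apply, smul_eq_mul]
      ring
    refine ⟨r, x₀, hr0, Or.inr (Or.inr (Or.inr ?_))⟩
    rcases lt_trichotomy t 0 with ht | ht | ht
    · refine Or.inr (Or.inr ⟨r • α, -2 * t, hn1, by linarith, fun x hx => ?_⟩)
      rw [key x hx, show -2 * t / 2 = -t by ring, neg_smul, sub_neg_eq_add]
    · refine Or.inl ⟨r • α, hn1, fun x hx => ?_⟩
      rw [key x hx, ht, zero_smul, add_zero]
    · refine Or.inr (Or.inl ⟨r • α, 2 * t, hn1, by linarith, fun x hx => ?_⟩)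
      rw [key x hx, show 2 * t / 2 = t by ring]
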